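/- Let G be a finite bipartite graph with color classes A and B, b : V(G) → ℕ, M a maximum b-matching of G, and let C and D be b-consistent flexible components. Then the following are equivalent: (i) C ⪯_A D (via a chain of b-consistent flexible components); (ii) for every u ∈ V(C) and every v ∈ V(D) there is an (M; A, B)-ascending path from u to v; (iii) there exist u ∈ V(C) and v ∈ V(D) such that there is an (M; A, B)-ascending path from u to v. -/

import Mathlib

open scoped symmDiff

variable {V : Type} [Fintype V]

/-- `G` is bipartite with color classes `A` and `B`. -/
structure Bipartition (G : SimpleGraph V) (A B : Set V) : Prop where
  disjoint : Disjoint A B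
  cover : A ∪ B = Set.univ
  between : ∀ ⦃u v : V⦄, G.Adj u v → (u ∈ A ∧ v ∈ B) ∨ (u ∈ B ∧ v ∈ A)

/-- `M` is a `b`-matching of `G`: a set of edges of `G` such that each vertex `v` is
incident to at most `b v` edges of `M`. -/
def IsBMatching (G : SimpleGraph V) (b : V → ℕ) (M : Set (Sym2 V)) : Prop :=
  M ⊆ G.edgeSet ∧ ∀ v : V, {e ∈ M | v ∈ e}.ncard ≤ b v

/-- `M` is a maximum `b`-matching of `G`. -/
def IsMaxBMatching (G : SimpleGraph V) (b : V → ℕ) (M : Set (Sym2 V)) : Prop :=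
  IsBMatching G b M ∧ ∀ N : Set (Sym2 V), IsBMatching G b N → N.ncard ≤ M.ncard

/-- `E[X]`: the set of edges of `G` with both ends in `X`. -/
def edgesIn (G : SimpleGraph V) (X : Set V) : Set (Sym2 V) :=
  {e ∈ G.edgeSet | ∀ v ∈ e, v ∈ X}

/-- `b(X) = ∑_{v ∈ X} b v`. -/
noncomputable def bSum (b : V → ℕ) (X : Set V) : ℕ := ∑ᶠ v ∈ X, b v

/-- `Z` is a `b`-verifying set: `b(Zᶜ) + |E[Z]|` equals the size of a maximum `b`-matching. -/
def IsVerifying (G : SimpleGraph V) (b : V → ℕ) (Z : Set V) : Prop :=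
  ∃ M : Set (Sym2 V), IsMaxBMatching G b M ∧ bSum b Zᶜ + (edgesIn G Z).ncard = M.ncard

/-- `v` is `M`-tight. -/
def IsTight (b : V → ℕ) (M : Set (Sym2 V)) (v : V) : Prop :=
  {e ∈ M | v ∈ e}.ncard = b v

/-- `v` is `M`-loose. -/
def IsLoose (b : V → ℕ) (M : Set (Sym2 V)) (v : V) : Prop :=
  {e ∈ M | v ∈ e}.ncard < b v

/-- `M` is a perfect `b`-matching. -/
def IsPerfect (G : SimpleGraph V) (b : V → ℕ) (M : Set (Sym2 V)) : Prop :=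
  IsBMatching G b M ∧ ∀ v : V, IsTight b M v

/-- An edge is `b`-inevitable if it is an edge of `G` contained in every maximum `b`-matching. -/
def IsInevitable (G : SimpleGraph V) (b : V → ℕ) (e : Sym2 V) : Prop :=
  e ∈ G.edgeSet ∧ ∀ M : Set (Sym2 V), IsMaxBMatching G b M → e ∈ M

/-- An edge is `b`-forbidden if it is an edge of `G` contained in no maximum `b`-matching. -/
def IsForbidden (G : SimpleGraph V) (b : V → ℕ) (e : Sym2 V) : Prop :=
  e ∈ G.edgeSet ∧ ∀ M : Set (Sym2 V), IsMaxBMatching G b M → e ∉ M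

/-- An edge is `b`-flexible if some maximum `b`-matching contains it and some does not. -/
def IsFlexibleEdge (G : SimpleGraph V) (b : V → ℕ) (e : Sym2 V) : Prop :=
  (∃ M : Set (Sym2 V), IsMaxBMatching G b M ∧ e ∈ M) ∧
  (∃ M : Set (Sym2 V), IsMaxBMatching G b M ∧ e ∉ M)

/-- The spanning subgraph of `G` whose edges are the `b`-flexible edges. -/
def flexGraph (G : SimpleGraph V) (b : V → ℕ) : SimpleGraph V where
  Adj u v := IsFlexibleEdge G b s(u, v)
  symm := by
    constructor
    intro u v h
    rwa [Sym2.eq_swap] at h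
  loopless := by
    constructor
    intro v h
    obtain ⟨⟨M, hM, heM⟩, -⟩ := h
    exact G.loopless.irrefl v ((G.mem_edgeSet).mp (hM.1.1 heM))

/-- A `b`-flexible component of `G`, identified with the corresponding connected
component of the spanning subgraph of flexible edges. -/
abbrev FlexComp (G : SimpleGraph V) (b : V → ℕ) := (flexGraph G b).ConnectedComponent

/-- `D(G;b)`: the set of vertices that are `M`-loose for some maximum `b`-matching `M`. -/
def Dset (G : SimpleGraph V) (b : V → ℕ) : Set V :=
  {v | ∃ M : Set (Sym2 V), IsMaxBMatching G b M ∧ IsLoose b M v}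

/-- `c` is a `b`-loose flexible component. -/
def LooseComp (G : SimpleGraph V) (b : V → ℕ) (c : FlexComp G b) : Prop :=
  ∃ v ∈ c.supp, v ∈ Dset G b

/-- `c` is a `b`-inactive flexible component. -/
def InactiveComp (G : SimpleGraph V) (b : V → ℕ) (c : FlexComp G b) : Prop :=
  ∃ v, c.supp = {v} ∧ b v = 0

/-- `c` is a `b`-inconsistent flexible component. -/
def InconsistentComp (G : SimpleGraph V) (b : V → ℕ) (c : FlexComp G b) : Prop :=
  LooseComp G b c ∨ ∃ v, c.supp = {v} ∧ b v = 0 ∧ ∃ u ∈ Dset G b, G.Adj v u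

/-- `c` is a `b`-consistent flexible component. -/
def ConsistentComp (G : SimpleGraph V) (b : V → ℕ) (c : FlexComp G b) : Prop :=
  ¬ InconsistentComp G b c

/-- `c` is a `b`-loose flexible component hooked up by the color class `W`. -/
def LooseHooked (G : SimpleGraph V) (b : V → ℕ) (W : Set V) (c : FlexComp G b) : Prop :=
  ∃ v ∈ c.supp ∩ W, v ∈ Dset G b

/-- `c` is a `b`-inactive flexible component hooked up by the color class `W`. -/
def InactiveHooked (G : SimpleGraph V) (b : V → ℕ) (W : Set V) (c : FlexComp G b) : Prop :=
  ∃ v, c.supp = {v} ∧ b v = 0 ∧ ∃ u ∈ Dset G b ∩ W, G.Adj v u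

/-- `c` is a `b`-inconsistent flexible component hooked up by the color class `W`. -/
def HookedUp (G : SimpleGraph V) (b : V → ℕ) (W : Set V) (c : FlexComp G b) : Prop :=
  LooseHooked G b W c ∨ InactiveHooked G b W c

/-- `X` is separating: empty or a union of vertex sets of `b`-flexible components. -/
def IsSeparating (G : SimpleGraph V) (b : V → ℕ) (X : Set V) : Prop :=
  ∃ S : Set (FlexComp G b), X = ⋃ c ∈ S, c.supp

/-- The number of edges in the list `es` incident to `v` that lie in `M`. -/
noncomputable def edgeDeg (es : List (Sym2 V)) (M : Set (Sym2 V)) (v : V) : ℕ :=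
  {e : Sym2 V | e ∈ es ∧ v ∈ e ∧ e ∈ M}.ncard

/-- `p` is an `M`-wedge path from `x` to `y`. -/
def IsWedgePath {G : SimpleGraph V} (M : Set (Sym2 V)) {x y : V} (p : G.Walk x y) : Prop :=
  p.IsPath ∧ (∀ v ∈ p.support, v ≠ y → edgeDeg p.edges M v = 1) ∧ edgeDeg p.edges M y = 0

/-- `p` is an `M`-saturated path between `x` and `y`. -/
def IsSaturatedPath {G : SimpleGraph V} (M : Set (Sym2 V)) {x y : V} (p : G.Walk x y) : Prop :=
  p.IsPath ∧ ∀ v ∈ p.support, edgeDeg p.edges M v = 1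

/-- `p` is an `M`-exposed path between `x` and `y`. -/
def IsExposedPath {G : SimpleGraph V} (M : Set (Sym2 V)) {x y : V} (p : G.Walk x y) : Prop :=
  p.IsPath ∧ ∀ v ∈ p.support, edgeDeg p.edges Mᶜ v = 1

/-- `p` is an `(M; A, B)`-ascending path from `u` to `v`. -/
def IsAscending {G : SimpleGraph V} (A B : Set V) (M : Set (Sym2 V)) {u v : V}
    (p : G.Walk u v) : Prop :=
  (u ∈ A → v ∈ A → IsWedgePath M p) ∧
  (u ∈ A → v ∈ B → IsSaturatedPath M p) ∧
  (u ∈ B → v ∈ A → IsExposedPath M p) ∧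
  (u ∈ B → v ∈ B → IsWedgePath M p.reverse)

/-- The one-step relation `⊴_A` on `b`-flexible components: `c₁ ⊴_A c₂` iff `c₁ = c₂`, or
there is a `b`-inevitable edge between `V(c₁) ∩ A` and `V(c₂) ∩ B`, or a `b`-forbidden edge
between `V(c₂) ∩ A` and `V(c₁) ∩ B`. -/
def StepRel (G : SimpleGraph V) (b : V → ℕ) (A B : Set V) (c₁ c₂ : FlexComp G b) : Prop :=
  c₁ = c₂ ∨
  (∃ u ∈ c₁.supp ∩ A, ∃ v ∈ c₂.supp ∩ B, IsInevitable G b s(u, v)) ∨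
  (∃ u ∈ c₂.supp ∩ A, ∃ v ∈ c₁.supp ∩ B, IsForbidden G b s(u, v))

/-- The one-step relation `⊴_A` restricted to `b`-consistent flexible components. -/
def ConsStepRel (G : SimpleGraph V) (b : V → ℕ) (A B : Set V) (c₁ c₂ : FlexComp G b) : Prop :=
  ConsistentComp G b c₁ ∧ ConsistentComp G b c₂ ∧ StepRel G b A B c₁ c₂

/-- `I` is a lower ideal of the relation `r`. -/
def IsLowerIdeal {α : Type*} (r : α → α → Prop) (I : Set α) : Prop :=
  ∀ ⦃c d : α⦄, d ∈ I → r c d → c ∈ I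

/-- `I` is an upper ideal of the relation `r`. -/
def IsUpperIdeal {α : Type*} (r : α → α → Prop) (I : Set α) : Prop :=
  ∀ ⦃c d : α⦄, c ∈ I → r c d → d ∈ I

/-!
Orient the edges of `M` from `A` to `B` and all other edges from `B` to `A`. A path is
`(M; A, B)`-ascending from `u` to `v` exactly when it is a directed path from `u` to `v`, so the
theorem compares `⪯_A` with reachability in this orientation.

If `S` is closed under outgoing arcs and all vertices of `(A ∩ S) ∪ (B \ S)` are `M`-tight, then `S`
is an optimal dual solution: counting the degrees of these vertices and the net flow of matching
edges out of `S` shows that the same conditions hold for every maximum `b`-matching `N`, and that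
`N` agrees with `M` on the boundary of `S`. Flexible edges therefore never cross the boundary of
`S`. Taking for `S` the vertices reachable from a vertex `z` together with those reachable from
loose vertices of `B` shows that each flexible component is strongly connected, unless it meets the
set of vertices that reach a loose vertex of `A` or are reachable from a loose vertex of `B`.
Switching `M` along directed paths shows that these exceptions are precisely the inconsistent
components.
-/

namespace Bipartition

variable {G : SimpleGraph V} {A B : Set V}

omit [Fintype V]

theorem symm (hG : Bipartition G A B) : Bipartition G B A where
  disjoint := hG.disjoint.symm
  cover := by rw [Set.union_comm, hG.cover]
  between _ _ huv := (hG.between huv).symm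

theorem eq_compl (hG : Bipartition G A B) : B = Aᶜ :=
  (IsCompl.of_eq hG.disjoint.eq_bot hG.cover).compl_eq.symm

theorem mem_right_iff (hG : Bipartition G A B) {v : V} : v ∈ B ↔ v ∉ A := by
  rw [hG.eq_compl, Set.mem_compl_iff]

theorem mem_iff_notMem_of_adj (hG : Bipartition G A B) {u v : V} (huv : G.Adj u v) :
    v ∈ A ↔ u ∉ A := by
  have := hG.between huv
  rw [hG.mem_right_iff, hG.mem_right_iff] at this
  tauto

end Bipartition

section Degree

omit [Fintype V]

/-- The degree of `v` in the edge set `M`. -/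
noncomputable def incidenceDegree (M : Set (Sym2 V)) (v : V) : ℕ := {e ∈ M | v ∈ e}.ncard

theorem isLoose_iff {b : V → ℕ} {M : Set (Sym2 V)} {v : V} :
    IsLoose b M v ↔ incidenceDegree M v < b v :=
  Iff.rfl

theorem incidenceDegree_eq_zero {M : Set (Sym2 V)} {v : V} (h : ∀ e ∈ M, v ∉ e) :
    incidenceDegree M v = 0 := by
  have : {e ∈ M | v ∈ e} = ∅ := Set.eq_empty_of_forall_notMem fun e he => h e he.1 he.2
  rw [incidenceDegree, this, Set.ncard_empty]

open scoped Classical in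
theorem incidenceDegree_insert {M : Set (Sym2 V)} (hM : M.Finite) {e : Sym2 V} (he : e ∉ M)
    (v : V) : incidenceDegree (insert e M) v = incidenceDegree M v + if v ∈ e then 1 else 0 := by
  unfold incidenceDegree
  split_ifs with hv
  · rw [← Set.ncard_insert_of_notMem (fun h => he h.1) (hM.sep _)]
    congr 1
    ext e'
    grind
  · congr 1
    ext e'
    grind

theorem incidenceDegree_pos_iff [Finite V] {M : Set (Sym2 V)} {u : V} :
    0 < incidenceDegree M u ↔ ∃ v, s(u, v) ∈ M := by
  rw [incidenceDegree, Set.ncard_pos]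
  constructor
  · rintro ⟨e, he, v, rfl⟩
    exact ⟨v, he⟩
  · rintro ⟨v, hv⟩
    exact ⟨s(u, v), hv, Sym2.mem_mk_left u v⟩

end Degree

section AlternatingWalk

omit [Fintype V]

variable {G : SimpleGraph V} {A B : Set V} {M X : Set (Sym2 V)} {u v w : V}

/-- The arcs of the orientation of `G` in which the edges of `M` leave `A` and all other edges
enter `A`. -/
def MatchingArc (G : SimpleGraph V) (A : Set V) (M : Set (Sym2 V)) (u v : V) : Prop :=
  G.Adj u v ∧ (u ∈ A ↔ s(u, v) ∈ M)

/-- Reachability along the arcs of the orientation of `G` given by `A` and `M`. -/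
abbrev MatchingReach (G : SimpleGraph V) (A : Set V) (M : Set (Sym2 V)) : V → V → Prop :=
  Relation.ReflTransGen (MatchingArc G A M)

theorem matchingArc_swap (hG : Bipartition G A B) :
    MatchingArc G B M u v ↔ MatchingArc G A M v u := by
  unfold MatchingArc
  rw [G.adj_comm v u, Sym2.eq_swap, and_congr_right_iff]
  intro huv
  rw [hG.mem_right_iff, hG.mem_iff_notMem_of_adj huv]

theorem matchingReach_swap (hG : Bipartition G A B) :
    MatchingReach G B M u v ↔ MatchingReach G A M v u := by
  have : MatchingArc G B M = Function.swap (MatchingArc G A M) := by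
    ext x y
    exact matchingArc_swap hG
  rw [MatchingReach, this, Relation.reflTransGen_swap]

/-- A walk following the arcs of the orientation of `G` given by `A` and `M`. -/
def IsAlternatingWalk (A : Set V) (M : Set (Sym2 V)) (p : G.Walk u v) : Prop :=
  ∀ d ∈ p.darts, (d.fst ∈ A ↔ d.edge ∈ M)

theorem isAlternatingWalk_cons {h : G.Adj u v} {p : G.Walk v w} :
    IsAlternatingWalk A M (.cons h p) ↔ MatchingArc G A M u v ∧ IsAlternatingWalk A M p := by
  simp [IsAlternatingWalk, MatchingArc, h]

theorem isAlternatingWalk_right_compl (hG : Bipartition G A B) {p : G.Walk u v} :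
    IsAlternatingWalk B Mᶜ p ↔ IsAlternatingWalk A M p := by
  simp only [IsAlternatingWalk, hG.mem_right_iff, Set.mem_compl_iff, not_iff_not]

theorem matchingReach_iff_exists_isPath :
    MatchingReach G A M u v ↔ ∃ p : G.Walk u v, p.IsPath ∧ IsAlternatingWalk A M p := by
  constructor
  · intro h
    obtain ⟨p, hp⟩ : ∃ p : G.Walk u v, IsAlternatingWalk A M p := by
      induction h using Relation.ReflTransGen.head_induction_on with
      | refl => exact ⟨.nil, by simp [IsAlternatingWalk]⟩
      | head huw _ ih =>
        obtain ⟨p, hp⟩ := ih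
        exact ⟨.cons huw.1 p, isAlternatingWalk_cons.mpr ⟨huw, hp⟩⟩
    classical
    exact ⟨p.bypass, p.bypass_isPath, fun d hd => hp d (p.darts_bypass_subset_darts hd)⟩
  · rintro ⟨p, -, hp⟩
    induction p with
    | nil => exact .refl
    | cons h p ih =>
      obtain ⟨harc, hp⟩ := isAlternatingWalk_cons.mp hp
      exact .head harc (ih hp)

open scoped Classical in
/-- The number of `M`-edges at `w` of an alternating path from `u` to `v`: these are the arcs
leaving `w` if `w ∈ A`, and the arcs entering `w` otherwise. -/
noncomputable def alternatingDegree (A : Set V) (u v w : V) : ℕ :=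
  if w ∈ A then (if w = v then 0 else 1) else (if w = u then 0 else 1)

theorem edgeDeg_eq_incidenceDegree (p : G.Walk u v) :
    edgeDeg p.edges X w = incidenceDegree (p.edgeSet ∩ X) w := by
  unfold edgeDeg incidenceDegree
  congr 1
  ext e
  simp only [Set.mem_ofPred_eq, Set.mem_inter_iff, SimpleGraph.Walk.mem_edgeSet]
  tauto

theorem edgeDeg_eq_zero_of_notMem_support (p : G.Walk u v) (hw : w ∉ p.support) :
    edgeDeg p.edges X w = 0 := by
  rw [edgeDeg_eq_incidenceDegree]
  exact incidenceDegree_eq_zero fun e he hwe =>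
    hw (SimpleGraph.Walk.mem_support_of_mem_edges he.1 hwe)

open scoped Classical in
theorem edgeDeg_cons (h : G.Adj u v) (p : G.Walk v w) (he : s(u, v) ∉ p.edges) (x : V) :
    edgeDeg (SimpleGraph.Walk.cons h p).edges X x =
      edgeDeg p.edges X x + if s(u, v) ∈ X ∧ x ∈ s(u, v) then 1 else 0 := by
  rw [edgeDeg_eq_incidenceDegree, edgeDeg_eq_incidenceDegree, SimpleGraph.Walk.edgeSet_cons]
  have hfin : (p.edgeSet ∩ X).Finite := p.edges.finite_toSet.inter_of_left X
  by_cases heX : s(u, v) ∈ X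
  · rw [Set.insert_inter_of_mem heX, incidenceDegree_insert hfin fun h => he h.1]
    simp [heX]
  · simp [Set.insert_inter_of_notMem heX, heX]

theorem isAlternatingWalk_iff_edgeDeg (hG : Bipartition G A B) {p : G.Walk u v} (hp : p.IsPath) :
    IsAlternatingWalk A X p ↔ ∀ w ∈ p.support, edgeDeg p.edges X w = alternatingDegree A u v w := by
  classical
  induction p with
  | nil => simp [IsAlternatingWalk, edgeDeg, alternatingDegree]
  | @cons u u' v h p ih =>
    obtain ⟨hp, hu⟩ := (SimpleGraph.Walk.cons_isPath_iff h p).mp hp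
    have he : s(u, u') ∉ p.edges := fun he => hu (p.fst_mem_support_of_mem_edges he)
    have huv : u ≠ v := fun huv => hu (huv ▸ p.end_mem_support)
    have hAu := hG.mem_iff_notMem_of_adj h
    have start_iff : edgeDeg (SimpleGraph.Walk.cons h p).edges X u = alternatingDegree A u v u ↔
        MatchingArc G A X u u' := by
      rw [edgeDeg_cons h p he, edgeDeg_eq_zero_of_notMem_support p hu]
      by_cases huA : u ∈ A <;> simp [alternatingDegree, MatchingArc, h, huA, huv]
    rw [isAlternatingWalk_cons, ih hp, SimpleGraph.Walk.support_cons, List.forall_mem_cons,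
      start_iff]
    refine and_congr_right fun harc => forall₂_congr fun w hw => ?_
    have hwu : w ≠ u := fun hwu => hu (hwu ▸ hw)
    rw [edgeDeg_cons h p he]
    rcases eq_or_ne w u' with rfl | hwu'
    · simp only [alternatingDegree, ← harc.2, hAu, Sym2.mem_mk_right, and_true]
      by_cases huA : u ∈ A <;> simp [huA, hwu]
    · by_cases hwA : w ∈ A <;> simp [alternatingDegree, hwA, hwu, hwu']

theorem alternatingDegree_of_mem_of_notMem (hu : u ∈ A) (hv : v ∉ A) :
    alternatingDegree A u v w = 1 := by
  grind [alternatingDegree]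

open scoped Classical in
theorem alternatingDegree_of_mem_of_mem (hu : u ∈ A) (hv : v ∈ A) :
    alternatingDegree A u v w = if w = v then 0 else 1 := by
  grind [alternatingDegree]

open scoped Classical in
theorem alternatingDegree_of_notMem_of_notMem (hu : u ∉ A) (hv : v ∉ A) :
    alternatingDegree A u v w = if w = u then 0 else 1 := by
  grind [alternatingDegree]

open scoped Classical in
theorem isWedgePath_iff {p : G.Walk u v} :
    IsWedgePath M p ↔
      p.IsPath ∧ ∀ w ∈ p.support, edgeDeg p.edges M w = if w = v then 0 else 1 := by
  have := p.end_mem_support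
  grind [IsWedgePath]

open scoped Classical in
theorem isWedgePath_reverse_iff {p : G.Walk u v} :
    IsWedgePath M p.reverse ↔
      p.IsPath ∧ ∀ w ∈ p.support, edgeDeg p.edges M w = if w = u then 0 else 1 := by
  rw [isWedgePath_iff, SimpleGraph.Walk.isPath_reverse_iff]
  simp only [SimpleGraph.Walk.support_reverse, List.mem_reverse, edgeDeg,
    SimpleGraph.Walk.edges_reverse]

theorem isAscending_iff (hG : Bipartition G A B) {p : G.Walk u v} :
    IsAscending A B M p ↔ p.IsPath ∧ IsAlternatingWalk A M p := by
  unfold IsAscending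
  by_cases hu : u ∈ A <;> by_cases hv : v ∈ A <;>
    simp only [hG.mem_right_iff, hu, hv, not_true, not_false_iff, true_imp_iff, false_imp_iff,
      true_and, and_true]
  · rw [isWedgePath_iff]
    refine and_congr_right fun hp => ?_
    simp only [isAlternatingWalk_iff_edgeDeg hG hp, alternatingDegree_of_mem_of_mem hu hv]
  · refine and_congr_right fun hp => ?_
    simp only [isAlternatingWalk_iff_edgeDeg hG hp, alternatingDegree_of_mem_of_notMem hu hv]
  · refine and_congr_right fun hp => ?_
    rw [← isAlternatingWalk_right_compl hG, isAlternatingWalk_iff_edgeDeg hG.symm hp]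
    simp only [alternatingDegree_of_mem_of_notMem (hG.mem_right_iff.mpr hu)
      (mt hG.mem_right_iff.mp (not_not.mpr hv))]
  · rw [isWedgePath_reverse_iff]
    refine and_congr_right fun hp => ?_
    simp only [isAlternatingWalk_iff_edgeDeg hG hp, alternatingDegree_of_notMem_of_notMem hu hv]

theorem exists_isAscending_iff (hG : Bipartition G A B) :
    (∃ p : G.Walk u v, IsAscending A B M p) ↔ MatchingReach G A M u v := by
  simp only [isAscending_iff hG, matchingReach_iff_exists_isPath]

end AlternatingWalk

section NetDegree

omit [Fintype V]

variable {G : SimpleGraph V} {A B : Set V} {M N : Set (Sym2 V)} {u v : V}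

open scoped Classical in
theorem incidenceDegree_eq_sum [Fintype V] (M : Set (Sym2 V)) (v : V) :
    incidenceDegree M v = ∑ u, if s(v, u) ∈ M then 1 else 0 := by
  have himage : {e ∈ M | v ∈ e} = (fun u => s(v, u)) '' {u | s(v, u) ∈ M} := by
    ext e
    simp only [Set.mem_image, Sym2.mem_iff_exists]
    grind
  rw [incidenceDegree, himage, Set.ncard_image_of_injective _ fun _ _ => Sym2.congr_right.mp,
    Set.ncard_eq_toFinset_card', Set.toFinset_ofPred, Finset.card_filter]

theorem incidenceDegree_edgeSet (v : V) [Fintype (G.neighborSet v)] :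
    incidenceDegree G.edgeSet v = G.degree v := by
  classical
  rw [← G.card_incidenceSet_eq_degree]
  exact Nat.card_eq_fintype_card (α := G.incidenceSet v)

theorem exists_le_edgeSet_eq (hM : M ⊆ G.edgeSet) : ∃ H ≤ G, H.edgeSet = M := by
  refine ⟨.fromEdgeSet M, by simpa using Set.sdiff_subset.trans hM, ?_⟩
  rw [SimpleGraph.edgeSet_fromEdgeSet]
  exact sdiff_eq_left.mpr (Set.subset_compl_iff_disjoint_right.mp
    (hM.trans G.edgeSet_subset_compl_diagSet))

open scoped Classical in
theorem ncard_eq_sum_incidenceDegree [Fintype V] (hG : Bipartition G A B) (hM : M ⊆ G.edgeSet) :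
    M.ncard = ∑ v with v ∈ A, incidenceDegree M v := by
  obtain ⟨H, hHG, rfl⟩ := exists_le_edgeSet_eq hM
  have hH : H.IsBipartiteWith ↑({v | v ∈ A} : Finset V) ↑({v | v ∈ B} : Finset V) :=
    ⟨by simpa using hG.disjoint, fun u v huv => by simpa using hG.between (hHG huv)⟩
  simp only [incidenceDegree_edgeSet, SimpleGraph.isBipartiteWith_sum_degrees_eq_card_edges hH,
    Set.ncard_eq_toFinset_card', SimpleGraph.edgeFinset]

open scoped Classical in
/-- The sign of a vertex in the orientation of edges from `A` to its complement. -/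
noncomputable def colorSign (A : Set V) (v : V) : ℤ := if v ∈ A then 1 else -1

/-- The net outflow at `v` of the unit flow along the edges of `M`, directed away from `A`. -/
noncomputable def netDegree (A : Set V) (M : Set (Sym2 V)) (v : V) : ℤ :=
  colorSign A v * incidenceDegree M v

open scoped Classical in
/-- The flow from `v` to `u` in the unit flow along the edges of `M`, directed away from `A`. -/
noncomputable def edgeFlow (A : Set V) (M : Set (Sym2 V)) (v u : V) : ℤ :=
  if s(v, u) ∈ M then colorSign A v else 0

theorem colorSign_eq_neg (hG : Bipartition G A B) (huv : G.Adj u v) :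
    colorSign A v = -colorSign A u := by
  have := hG.mem_iff_notMem_of_adj huv
  by_cases hu : u ∈ A <;> simp_all [colorSign]

theorem edgeFlow_swap (hG : Bipartition G A B) (hM : M ⊆ G.edgeSet) (u v : V) :
    edgeFlow A M v u = -edgeFlow A M u v := by
  unfold edgeFlow
  rw [Sym2.eq_swap]
  split_ifs with h
  · exact colorSign_eq_neg hG (hM h)
  · exact neg_zero.symm

theorem edgeFlow_eq_iff :
    edgeFlow A M v u = edgeFlow A N v u ↔ (s(v, u) ∈ M ↔ s(v, u) ∈ N) := by
  grind [edgeFlow, colorSign]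

theorem netDegree_eq_sum_edgeFlow [Fintype V] (A : Set V) (M : Set (Sym2 V)) (v : V) :
    netDegree A M v = ∑ u, edgeFlow A M v u := by
  simp [netDegree, edgeFlow, incidenceDegree_eq_sum, Finset.sum_ite, mul_comm]

theorem sum_sum_eq_sum_sum_compl_of_antisymm {ι R : Type*} [Fintype ι] [DecidableEq ι]
    [AddCommGroup R] [IsAddTorsionFree R] {f : ι → ι → R} (hf : ∀ u v, f v u = -f u v)
    (s : Finset ι) :
    ∑ v ∈ s, ∑ u, f v u = ∑ v ∈ s, ∑ u ∈ sᶜ, f v u := by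
  have hinner : ∑ v ∈ s, ∑ u ∈ s, f v u = -∑ v ∈ s, ∑ u ∈ s, f v u := by
    conv_lhs => rw [Finset.sum_comm]
    simp only [← Finset.sum_neg_distrib, ← hf]
  simp only [← Finset.sum_add_sum_compl s, Finset.sum_add_distrib, self_eq_neg.mp hinner, zero_add]

open scoped Classical in
theorem sum_netDegree_eq_sum_edgeFlow [Fintype V] (hG : Bipartition G A B) (hM : M ⊆ G.edgeSet)
    (S : Set V) :
    ∑ v with v ∈ S, netDegree A M v =
      ∑ v with v ∈ S, ∑ u with u ∉ S, edgeFlow A M v u := by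
  simp only [netDegree_eq_sum_edgeFlow]
  rw [sum_sum_eq_sum_sum_compl_of_antisymm (edgeFlow_swap hG hM), Finset.compl_filter]

open scoped Classical in
theorem ncard_eq_sum_netDegree [Fintype V] (hG : Bipartition G A B) (hM : M ⊆ G.edgeSet) :
    (M.ncard : ℤ) = ∑ v with v ∈ A, netDegree A M v := by
  rw [ncard_eq_sum_incidenceDegree hG hM, Nat.cast_sum]
  refine Finset.sum_congr rfl fun v hv => ?_
  rw [netDegree, colorSign, if_pos (Finset.mem_filter.mp hv).2, one_mul]

open scoped Classical in
theorem ncard_add_sum_netDegree [Fintype V] (hG : Bipartition G A B) (hM : M ⊆ G.edgeSet)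
    (S : Set V) :
    M.ncard + ∑ v with v ∈ S, netDegree A M v =
      ∑ v with (v ∈ A ↔ v ∈ S), (incidenceDegree M v : ℤ) := by
  rw [ncard_eq_sum_incidenceDegree hG.symm hM, Nat.cast_sum]
  simp only [Finset.sum_filter, ← Finset.sum_add_distrib, hG.mem_right_iff]
  refine Finset.sum_congr rfl fun v _ => ?_
  by_cases hA : v ∈ A <;> by_cases hS : v ∈ S <;> simp [hA, hS, netDegree, colorSign]

end NetDegree

section TightCut

omit [Fintype V]

variable {G : SimpleGraph V} {A B S : Set V} {b : V → ℕ} {M N : Set (Sym2 V)} {u v x y : V}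

theorem IsMaxBMatching.ncard_eq (hM : IsMaxBMatching G b M) (hN : IsMaxBMatching G b N) :
    M.ncard = N.ncard :=
  (hN.2 M hM.1).antisymm (hM.2 N hN.1)

theorem IsMaxBMatching.of_ncard_eq (hM : IsMaxBMatching G b M) (hN : IsBMatching G b N)
    (h : N.ncard = M.ncard) : IsMaxBMatching G b N :=
  ⟨hN, fun M' hM' => h ▸ hM.2 M' hM'⟩

/-- The set `S` is closed under the arcs of the orientation given by `A` and `M`, and every vertex
of `(A ∩ S) ∪ (Aᶜ \ S)` is `M`-tight. These are the complementary slackness conditions of `M` with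
the dual solution given by the vertex set `(A ∩ S) ∪ (Aᶜ \ S)`. -/
structure IsTightCut (G : SimpleGraph V) (A : Set V) (b : V → ℕ) (M : Set (Sym2 V)) (S : Set V) :
    Prop where
  closed : ∀ ⦃v⦄, v ∈ S → ∀ ⦃u⦄, MatchingArc G A M v u → u ∈ S
  not_isLoose : ∀ ⦃v⦄, (v ∈ A ↔ v ∈ S) → ¬ IsLoose b M v

namespace IsTightCut

theorem mem_iff_of_adj (hS : IsTightCut G A b M S) (hvu : G.Adj v u) (hv : v ∈ S) (hu : u ∉ S) :
    s(v, u) ∈ M ↔ v ∉ A := by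
  have : ¬ MatchingArc G A M v u := fun harc => hu (hS.closed hv harc)
  simp only [MatchingArc, hvu, true_and] at this
  tauto

theorem edgeFlow_le (hS : IsTightCut G A b M S) (hM : M ⊆ G.edgeSet) (hN : N ⊆ G.edgeSet)
    (hv : v ∈ S) (hu : u ∉ S) : edgeFlow A M v u ≤ edgeFlow A N v u := by
  by_cases hvu : G.Adj v u
  · have := hS.mem_iff_of_adj hvu hv hu
    grind [edgeFlow, colorSign]
  · simp [edgeFlow, mt (@hM s(v, u)) hvu, mt (@hN s(v, u)) hvu]

theorem incidenceDegree_eq_and_edgeFlow_eq [Finite V] (hG : Bipartition G A B)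
    (hM : IsMaxBMatching G b M) (hN : IsMaxBMatching G b N) (hS : IsTightCut G A b M S) :
    (∀ v, (v ∈ A ↔ v ∈ S) → incidenceDegree N v = incidenceDegree M v) ∧
      ∀ v ∈ S, ∀ u ∉ S, edgeFlow A M v u = edgeFlow A N v u := by
  classical
  cases nonempty_fintype V
  have hdeg_le : ∀ v ∈ Finset.univ.filter (fun v => v ∈ A ↔ v ∈ S),
      incidenceDegree N v ≤ incidenceDegree M v := fun v hv =>
    (hN.1.2 v).trans (not_lt.mp (hS.not_isLoose (Finset.mem_filter.mp hv).2))
  have hflow_le : ∀ v ∈ Finset.univ.filter (· ∈ S), ∀ u ∈ Finset.univ.filter (· ∉ S),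
      edgeFlow A M v u ≤ edgeFlow A N v u := fun v hv u hu =>
    hS.edgeFlow_le hM.1.1 hN.1.1 (Finset.mem_filter.mp hv).2 (Finset.mem_filter.mp hu).2
  have hdeg := Finset.sum_le_sum hdeg_le
  have hflow := Finset.sum_le_sum fun v hv => Finset.sum_le_sum (hflow_le v hv)
  have hMS := ncard_add_sum_netDegree hG hM.1.1 S
  have hNS := ncard_add_sum_netDegree hG hN.1.1 S
  rw [sum_netDegree_eq_sum_edgeFlow hG hM.1.1, ← Nat.cast_sum] at hMS
  rw [sum_netDegree_eq_sum_edgeFlow hG hN.1.1, ← Nat.cast_sum] at hNS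
  have hcard := hM.ncard_eq hN
  constructor
  · intro v hv
    exact (Finset.sum_eq_sum_iff_of_le hdeg_le).mp (by lia) v (by simpa using hv)
  · intro v hv u hu
    have hrow := (Finset.sum_eq_sum_iff_of_le fun v hv => Finset.sum_le_sum (hflow_le v hv)).mp
      (by lia) v (by simpa using hv)
    exact (Finset.sum_eq_sum_iff_of_le (hflow_le v (by simpa using hv))).mp hrow u
      (by simpa using hu)

theorem congr [Finite V] (hG : Bipartition G A B) (hM : IsMaxBMatching G b M)
    (hN : IsMaxBMatching G b N) (hS : IsTightCut G A b M S) : IsTightCut G A b N S := by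
  obtain ⟨hdeg, hflow⟩ := hS.incidenceDegree_eq_and_edgeFlow_eq hG hM hN
  constructor
  · intro v hv u harc
    by_contra hu
    have hMN := edgeFlow_eq_iff.mp (hflow v hv u hu)
    rw [hS.mem_iff_of_adj harc.1 hv hu, ← harc.2] at hMN
    exact iff_not_self hMN.symm
  · intro v hv
    rw [isLoose_iff, hdeg v hv]
    exact hS.not_isLoose hv

theorem mem_of_isFlexibleEdge [Finite V] (hG : Bipartition G A B) (hM : IsMaxBMatching G b M)
    (hS : IsTightCut G A b M S) (hvu : IsFlexibleEdge G b s(v, u)) (hv : v ∈ S) : u ∈ S := by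
  obtain ⟨⟨M₁, hM₁, he₁⟩, M₂, hM₂, he₂⟩ := hvu
  by_contra hu
  have hadj : G.Adj v u := hM₁.1.1 he₁
  rw [(hS.congr hG hM hM₁).mem_iff_of_adj hadj hv hu] at he₁
  rw [(hS.congr hG hM hM₂).mem_iff_of_adj hadj hv hu] at he₂
  exact he₂ he₁

theorem mem_of_flexGraph_reachable [Finite V] (hG : Bipartition G A B)
    (hM : IsMaxBMatching G b M) (hS : IsTightCut G A b M S) (hxy : (flexGraph G b).Reachable x y)
    (hx : x ∈ S) : y ∈ S := by
  rw [SimpleGraph.reachable_iff_reflTransGen] at hxy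
  induction hxy with
  | refl => exact hx
  | tail _ hzy hz => exact hS.mem_of_isFlexibleEdge hG hM hzy hz

end IsTightCut

end TightCut

section Flip

omit [Fintype V]

variable [Finite V] {G : SimpleGraph V} {A B : Set V} {b : V → ℕ} {M : Set (Sym2 V)} {u v x y : V}

open scoped Classical in
theorem netDegree_insert (he : s(u, v) ∉ M) (huv : u ≠ v) :
    netDegree A (insert s(u, v) M) =
      netDegree A M + Pi.single u (colorSign A u) + Pi.single v (colorSign A v) := by
  ext w
  simp only [netDegree, incidenceDegree_insert M.toFinite he, Pi.add_apply]
  grind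

open scoped Classical in
theorem netDegree_symmDiff_singleton (hG : Bipartition G A B) (harc : MatchingArc G A M u v) :
    netDegree A (M ∆ {s(u, v)}) = netDegree A M + Pi.single v 1 - Pi.single u 1 := by
  have hv := colorSign_eq_neg hG harc.1
  by_cases he : s(u, v) ∈ M
  · have hM : M = insert s(u, v) (M ∆ {s(u, v)}) := by grind
    have hu : colorSign A u = 1 := if_pos (harc.2.mpr he)
    conv_rhs => rw [hM, netDegree_insert (by simp [Set.mem_symmDiff, he]) harc.1.ne, hv, hu]
    rw [Pi.single_neg]
    abel
  · have hM : M ∆ {s(u, v)} = insert s(u, v) M := by grind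
    have hu : colorSign A u = -1 := if_neg (mt harc.2.mp he)
    rw [hM, netDegree_insert he harc.1.ne, hv, hu, Pi.single_neg, neg_neg]
    abel

open scoped Classical in
theorem netDegree_symmDiff_edgeSet (hG : Bipartition G A B) (p : G.Walk x y) (hp : p.IsTrail)
    (halt : IsAlternatingWalk A M p) :
    netDegree A (M ∆ p.edgeSet) = netDegree A M + Pi.single y 1 - Pi.single x 1 := by
  induction p with
  | nil => simp [← Set.bot_eq_empty]
  | @cons u v w h p ih =>
    obtain ⟨harc, halt⟩ := isAlternatingWalk_cons.mp halt
    obtain ⟨hp, he⟩ := (SimpleGraph.Walk.isTrail_cons h p).mp hp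
    have hflip : M ∆ (SimpleGraph.Walk.cons h p).edgeSet = (M ∆ p.edgeSet) ∆ {s(u, v)} := by
      rw [symmDiff_assoc, SimpleGraph.Walk.edgeSet_cons]
      congr 1
      grind [SimpleGraph.Walk.mem_edgeSet]
    have harc' : MatchingArc G A (M ∆ p.edgeSet) u v := by
      refine ⟨h, harc.2.trans ?_⟩
      simp [Set.mem_symmDiff, he]
    rw [hflip, netDegree_symmDiff_singleton hG harc', ih hp halt]
    abel

omit [Finite V] in
theorem symmDiff_edgeSet_subset (hM : M ⊆ G.edgeSet) (p : G.Walk x y) :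
    M ∆ p.edgeSet ⊆ G.edgeSet :=
  symmDiff_le_sup.trans (sup_le hM fun _ he => p.edges_subset_edgeSet he)

open scoped Classical in
theorem ncard_symmDiff_edgeSet (hG : Bipartition G A B) (hM : M ⊆ G.edgeSet) (p : G.Walk x y)
    (hp : p.IsTrail) (halt : IsAlternatingWalk A M p) :
    ((M ∆ p.edgeSet).ncard : ℤ) =
      M.ncard + (if y ∈ A then 1 else 0) - (if x ∈ A then 1 else 0) := by
  cases nonempty_fintype V
  rw [ncard_eq_sum_netDegree hG (symmDiff_edgeSet_subset hM p), ncard_eq_sum_netDegree hG hM,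
    netDegree_symmDiff_edgeSet hG p hp halt]
  simp [Finset.sum_add_distrib, Finset.sum_sub_distrib]

theorem isBMatching_symmDiff_edgeSet (hG : Bipartition G A B) (hM : IsBMatching G b M)
    (p : G.Walk x y) (hp : p.IsTrail) (halt : IsAlternatingWalk A M p)
    (hx : x ∉ A → IsLoose b M x) (hy : y ∈ A → IsLoose b M y) :
    IsBMatching G b (M ∆ p.edgeSet) := by
  classical
  refine ⟨symmDiff_edgeSet_subset hM.1 p, fun v => ?_⟩
  change incidenceDegree (M ∆ p.edgeSet) v ≤ b v
  have hv := congrFun (netDegree_symmDiff_edgeSet hG p hp halt) v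
  have hMv : incidenceDegree M v ≤ b v := hM.2 v
  simp only [isLoose_iff] at hx hy
  simp only [netDegree, Pi.add_apply, Pi.sub_apply, Pi.single_apply, colorSign] at hv
  grind

end Flip

section LooseBasin

omit [Fintype V]

variable {G : SimpleGraph V} {A B : Set V} {b : V → ℕ} {M : Set (Sym2 V)} {u v x y z : V}

/-- The vertices from which some `M`-loose vertex of `A` is reachable in the orientation of `G`
given by `A` and `M`. -/
def looseBasin (G : SimpleGraph V) (A : Set V) (b : V → ℕ) (M : Set (Sym2 V)) : Set V :=
  {u | ∃ y ∈ A, IsLoose b M y ∧ MatchingReach G A M u y}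

theorem mem_looseBasin_of_isLoose (hv : v ∈ A) (h : IsLoose b M v) : v ∈ looseBasin G A b M :=
  ⟨v, hv, h, .refl⟩

theorem mem_looseBasin_of_matchingReach (huv : MatchingReach G A M u v)
    (hv : v ∈ looseBasin G A b M) : u ∈ looseBasin G A b M := by
  obtain ⟨y, hyA, hy, hvy⟩ := hv
  exact ⟨y, hyA, hy, huv.trans hvy⟩

theorem mem_right_looseBasin_of_matchingReach (hG : Bipartition G A B)
    (huv : MatchingReach G A M u v) (hu : u ∈ looseBasin G B b M) : v ∈ looseBasin G B b M :=
  mem_looseBasin_of_matchingReach ((matchingReach_swap hG).mpr huv) hu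

theorem disjoint_looseBasin [Finite V] (hG : Bipartition G A B) (hM : IsMaxBMatching G b M) :
    Disjoint (looseBasin G A b M) (looseBasin G B b M) := by
  classical
  rw [Set.disjoint_left]
  rintro u ⟨y, hyA, hy, huy⟩ ⟨x, hxB, hx, hux⟩
  have hxA := hG.mem_right_iff.mp hxB
  obtain ⟨p, hp, halt⟩ :=
    matchingReach_iff_exists_isPath.mp (((matchingReach_swap hG).mp hux).trans huy)
  have hflip := hM.2 _ (isBMatching_symmDiff_edgeSet hG hM.1 p hp.isTrail halt
    (fun _ => hx) (fun _ => hy))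
  have hcard := ncard_symmDiff_edgeSet hG hM.1.1 p hp.isTrail halt
  rw [if_pos hyA, if_neg hxA] at hcard
  lia

theorem isTightCut_reachable_union_looseBasin [Finite V] (hG : Bipartition G A B)
    (hM : IsMaxBMatching G b M) (hz : z ∉ looseBasin G A b M) :
    IsTightCut G A b M ({w | MatchingReach G A M z w} ∪ looseBasin G B b M) where
  closed v hv u harc := by
    rcases hv with hzv | hv
    · exact .inl (hzv.tail harc)
    · exact .inr (mem_right_looseBasin_of_matchingReach hG (.single harc) hv)
  not_isLoose v hv hloose := by
    by_cases hvA : v ∈ A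
    · rcases hv.mp hvA with hzv | hvB
      · exact hz ⟨v, hvA, hloose, hzv⟩
      · exact (disjoint_looseBasin hG hM).notMem_of_mem_left
          (mem_looseBasin_of_isLoose hvA hloose) hvB
    · exact hvA (hv.mpr (.inr (mem_looseBasin_of_isLoose (hG.mem_right_iff.mpr hvA) hloose)))

theorem mem_looseBasin_of_mem_dset [Finite V] (hG : Bipartition G A B) (hM : IsMaxBMatching G b M)
    (hv : v ∈ Dset G b) (hvA : v ∈ A) : v ∈ looseBasin G A b M := by
  by_contra hnot
  obtain ⟨N, hN, hloose⟩ := hv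
  have hS := (isTightCut_reachable_union_looseBasin hG hM hnot).congr hG hM hN
  exact hS.not_isLoose (iff_of_true hvA (.inl .refl)) hloose

theorem matchingReach_of_flexGraph_reachable [Finite V] (hG : Bipartition G A B)
    (hM : IsMaxBMatching G b M) (hxy : (flexGraph G b).Reachable x y)
    (hx : x ∉ looseBasin G A b M) (hy : y ∉ looseBasin G B b M) : MatchingReach G A M x y :=
  ((isTightCut_reachable_union_looseBasin hG hM hx).mem_of_flexGraph_reachable hG hM hxy
    (.inl .refl)).resolve_right hy

theorem mem_looseBasin_of_flexGraph_reachable [Finite V] (hG : Bipartition G A B)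
    (hM : IsMaxBMatching G b M) (hxy : (flexGraph G b).Reachable x y)
    (hy : y ∈ looseBasin G A b M) : x ∈ looseBasin G A b M := by
  by_contra hx
  have hyB := (disjoint_looseBasin hG hM).notMem_of_mem_left hy
  exact hx (mem_looseBasin_of_matchingReach
    (matchingReach_of_flexGraph_reachable hG hM hxy hx hyB) hy)

theorem isMaxBMatching_symmDiff_edgeSet [Finite V] (hG : Bipartition G A B)
    (hM : IsMaxBMatching G b M) (p : G.Walk x y) (hp : p.IsTrail) (halt : IsAlternatingWalk A M p)
    (hxA : x ∈ A) (hyA : y ∈ A) (hy : IsLoose b M y) : IsMaxBMatching G b (M ∆ p.edgeSet) := by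
  classical
  have hcard := ncard_symmDiff_edgeSet hG hM.1.1 p hp halt
  rw [if_pos hxA, if_pos hyA, add_sub_cancel_right] at hcard
  exact hM.of_ncard_eq (isBMatching_symmDiff_edgeSet hG hM.1 p hp halt (absurd hxA ·) fun _ => hy)
    (by exact_mod_cast hcard)

theorem mem_dset_of_mem_looseBasin [Finite V] (hG : Bipartition G A B)
    (hM : IsMaxBMatching G b M) (hxA : x ∈ A) (hx : x ∈ looseBasin G A b M) : x ∈ Dset G b := by
  classical
  obtain ⟨y, hyA, hy, hxy⟩ := hx
  obtain ⟨p, hp, halt⟩ := matchingReach_iff_exists_isPath.mp hxy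
  rcases eq_or_ne x y with rfl | hne
  · exact ⟨M, hM, hy⟩
  refine ⟨_, isMaxBMatching_symmDiff_edgeSet hG hM p hp.isTrail halt hxA hyA hy, ?_⟩
  have hdeg := congrFun (netDegree_symmDiff_edgeSet hG p hp.isTrail halt) x
  have hMx : incidenceDegree M x ≤ b x := hM.1.2 x
  simp only [netDegree, colorSign, hxA, hne, Pi.add_apply, Pi.sub_apply, Pi.single_eq_same,
    Pi.single_eq_of_ne, if_true, one_mul, ne_eq, not_false_eq_true, add_zero] at hdeg
  rw [isLoose_iff]
  lia

theorem mk_notMem_edges_of_matchingArc (hG : Bipartition G A B) {p : G.Walk u y} (hp : p.IsPath)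
    (halt : IsAlternatingWalk A M p) (harc : MatchingArc G A M x u) : s(x, u) ∉ p.edges := by
  intro he
  obtain ⟨d, hd, hde⟩ := List.mem_map.mp he
  rcases SimpleGraph.dart_edge_eq_mk'_iff'.mp hde with ⟨-, hsnd⟩ | ⟨hfst, -⟩
  · have hu : u ∈ p.support.tail := by
      simpa only [p.map_snd_darts, hsnd] using List.mem_map_of_mem (f := (·.snd)) hd
    have hnodup := hp.support_nodup
    rw [← p.cons_tail_support, List.nodup_cons] at hnodup
    exact hnodup.1 hu
  · have hux := halt d hd
    rw [hde, hfst, hG.mem_iff_notMem_of_adj harc.1, harc.2] at hux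
    exact iff_not_self hux.symm

theorem isFlexibleEdge_of_matchingArc [Finite V] (hG : Bipartition G A B)
    (hM : IsMaxBMatching G b M) (hxA : x ∈ A) (harc : MatchingArc G A M x u)
    (hu : u ∈ looseBasin G A b M) : IsFlexibleEdge G b s(x, u) := by
  obtain ⟨y, hyA, hy, huy⟩ := hu
  obtain ⟨p, hp, halt⟩ := matchingReach_iff_exists_isPath.mp huy
  have he := mk_notMem_edges_of_matchingArc hG hp halt harc
  have heM : s(x, u) ∈ M := harc.2.mp hxA
  let q : G.Walk x y := .cons harc.1 p
  have hq : q.IsTrail := (SimpleGraph.Walk.isTrail_cons harc.1 p).mpr ⟨hp.isTrail, he⟩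
  refine ⟨⟨M, hM, heM⟩, M ∆ q.edgeSet, isMaxBMatching_symmDiff_edgeSet hG hM q hq
    (isAlternatingWalk_cons.mpr ⟨harc, halt⟩) hxA hyA hy, ?_⟩
  simp [Set.mem_symmDiff, heM, q]

end LooseBasin

section Consistency

omit [Fintype V]

variable [Finite V] {G : SimpleGraph V} {A B : Set V} {b : V → ℕ} {M : Set (Sym2 V)} {u v w : V}
  {c : FlexComp G b}

theorem IsBMatching.pos_of_mem (hM : IsBMatching G b M) (he : s(u, v) ∈ M) : 0 < b u :=
  (incidenceDegree_pos_iff.mpr ⟨v, he⟩).trans_le (hM.2 u)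

theorem supp_eq_singleton_of_eq_zero (hb : b u = 0) (hu : u ∈ c.supp) : c.supp = {u} := by
  have hisolated : ∀ v, ¬ (flexGraph G b).Adj u v := by
    rintro v ⟨⟨N, hN, he⟩, -⟩
    exact (hN.1.pos_of_mem he).ne' hb
  refine Set.eq_singleton_iff_unique_mem.mpr ⟨hu, fun v hv => ?_⟩
  have huv := c.reachable_of_mem_supp hu hv
  rw [SimpleGraph.reachable_iff_reflTransGen] at huv
  rcases huv.cases_head with huv | ⟨w, hw, -⟩
  · exact huv.symm
  · exact absurd hw (hisolated w)

theorem mem_looseBasin_of_adj_mem_dset (hG : Bipartition G A B) (hM : IsMaxBMatching G b M)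
    (hb : b v = 0) (hvw : G.Adj v w) (hw : w ∈ Dset G b) (hwA : w ∈ A) :
    v ∈ looseBasin G A b M := by
  have hvA : v ∉ A := (hG.mem_iff_notMem_of_adj hvw).mp hwA
  have he : s(v, w) ∉ M := fun he => (hM.1.pos_of_mem he).ne' hb
  exact mem_looseBasin_of_matchingReach (.single ⟨hvw, iff_of_false hvA he⟩)
    (mem_looseBasin_of_mem_dset hG hM hw hwA)

theorem InconsistentComp.mem_looseBasin (hG : Bipartition G A B) (hM : IsMaxBMatching G b M)
    (hc : InconsistentComp G b c) (hu : u ∈ c.supp) :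
    u ∈ looseBasin G A b M ∨ u ∈ looseBasin G B b M := by
  rcases hc with ⟨z, hz, hzD⟩ | ⟨v, hv, hb, w, hw, hvw⟩
  · have huz := c.reachable_of_mem_supp hu hz
    refine (hG.cover.ge (Set.mem_univ z)).imp (fun hzA => ?_) fun hzB => ?_
    · exact mem_looseBasin_of_flexGraph_reachable hG hM huz
        (mem_looseBasin_of_mem_dset hG hM hzD hzA)
    · exact mem_looseBasin_of_flexGraph_reachable hG.symm hM huz
        (mem_looseBasin_of_mem_dset hG.symm hM hzD hzB)
  · obtain rfl : u = v := by rwa [hv] at hu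
    exact (hG.cover.ge (Set.mem_univ w)).imp
      (mem_looseBasin_of_adj_mem_dset hG hM hb hvw hw)
      (mem_looseBasin_of_adj_mem_dset hG.symm hM hb hvw hw)

theorem inconsistentComp_of_mem_looseBasin (hG : Bipartition G A B) (hM : IsMaxBMatching G b M)
    (hu : u ∈ c.supp) (huA : u ∈ looseBasin G A b M) : InconsistentComp G b c := by
  by_cases hA : u ∈ A
  · exact .inl ⟨u, hu, mem_dset_of_mem_looseBasin hG hM hA huA⟩
  have ⟨y, hyA, hy, huy⟩ := huA
  obtain rfl | ⟨w, huw, hwy⟩ := huy.cases_head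
  · exact absurd hyA hA
  have hwD := mem_dset_of_mem_looseBasin hG hM ((hG.mem_iff_notMem_of_adj huw.1).mpr hA)
    ⟨y, hyA, hy, hwy⟩
  rcases (b u).eq_zero_or_pos with hb | hb
  · exact .inr ⟨u, supp_eq_singleton_of_eq_zero hb hu, hb, w, hwD, huw.1⟩
  by_cases hloose : IsLoose b M u
  · exact .inl ⟨u, hu, M, hM, hloose⟩
  obtain ⟨x, hux⟩ := incidenceDegree_pos_iff.mp (hb.trans_le (not_lt.mp hloose))
  have hadj : G.Adj x u := (hM.1.1 hux).symm
  have hxA : x ∈ A := (hG.mem_iff_notMem_of_adj hadj.symm).mpr hA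
  have harc : MatchingArc G A M x u := ⟨hadj, iff_of_true hxA (Sym2.eq_swap ▸ hux)⟩
  have hflex : (flexGraph G b).Adj x u := isFlexibleEdge_of_matchingArc hG hM hxA harc huA
  have hxc : x ∈ c.supp := c.mem_supp_of_adj_mem_supp hu hflex.symm
  exact .inl ⟨x, hxc, mem_dset_of_mem_looseBasin hG hM hxA
    (mem_looseBasin_of_matchingReach (.single harc) huA)⟩

theorem consistentComp_iff (hG : Bipartition G A B) (hM : IsMaxBMatching G b M)
    (hu : u ∈ c.supp) :
    ConsistentComp G b c ↔ u ∉ looseBasin G A b M ∧ u ∉ looseBasin G B b M := by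
  rw [ConsistentComp, ← not_or, not_iff_not]
  refine ⟨fun hc => hc.mem_looseBasin hG hM hu, ?_⟩
  rintro (huA | huB)
  · exact inconsistentComp_of_mem_looseBasin hG hM hu huA
  · exact inconsistentComp_of_mem_looseBasin hG.symm hM hu huB

end Consistency

section Chain

omit [Fintype V]

variable {G : SimpleGraph V} {A B : Set V} {b : V → ℕ} {M : Set (Sym2 V)} {u v x y : V}
  {c d : FlexComp G b} {e : Sym2 V}

theorem IsMaxBMatching.isInevitable_of_mem (hM : IsMaxBMatching G b M) (he : e ∈ M)
    (hflex : ¬ IsFlexibleEdge G b e) : IsInevitable G b e :=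
  ⟨hM.1.1 he, fun N hN => by_contra fun heN => hflex ⟨⟨M, hM, he⟩, N, hN, heN⟩⟩

theorem IsMaxBMatching.isForbidden_of_notMem (hM : IsMaxBMatching G b M) (heG : e ∈ G.edgeSet)
    (he : e ∉ M) (hflex : ¬ IsFlexibleEdge G b e) : IsForbidden G b e :=
  ⟨heG, fun N hN heN => hflex ⟨⟨N, hN, heN⟩, M, hM, he⟩⟩

theorem stepRel_of_matchingArc (hG : Bipartition G A B) (hM : IsMaxBMatching G b M)
    (harc : MatchingArc G A M x y) :
    StepRel G b A B ((flexGraph G b).connectedComponentMk x)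
      ((flexGraph G b).connectedComponentMk y) := by
  have hy := hG.mem_iff_notMem_of_adj harc.1
  by_cases hflex : IsFlexibleEdge G b s(x, y)
  · have hadj : (flexGraph G b).Adj x y := hflex
    exact .inl (SimpleGraph.ConnectedComponent.sound hadj.reachable)
  by_cases hx : x ∈ A
  · have hyB : y ∈ B := hG.mem_right_iff.mpr fun hyA => hy.mp hyA hx
    exact .inr (.inl ⟨x, ⟨rfl, hx⟩, y, ⟨rfl, hyB⟩,
      hM.isInevitable_of_mem (harc.2.mp hx) hflex⟩)
  · rw [Sym2.eq_swap] at hflex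
    have he : s(y, x) ∉ M := Sym2.eq_swap ▸ mt harc.2.mpr hx
    exact .inr (.inr ⟨y, ⟨rfl, hy.mpr hx⟩, x, ⟨rfl, hG.mem_right_iff.mpr hx⟩,
      hM.isForbidden_of_notMem harc.1.symm he hflex⟩)

variable [Finite V]

theorem ConsistentComp.matchingReach (hG : Bipartition G A B) (hM : IsMaxBMatching G b M)
    (hc : ConsistentComp G b c) (hu : u ∈ c.supp) (hv : v ∈ c.supp) : MatchingReach G A M u v :=
  matchingReach_of_flexGraph_reachable hG hM (c.reachable_of_mem_supp hu hv)
    ((consistentComp_iff hG hM hu).mp hc).1 ((consistentComp_iff hG hM hv).mp hc).2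

theorem ConsStepRel.matchingReach (hG : Bipartition G A B) (hM : IsMaxBMatching G b M)
    (h : ConsStepRel G b A B c d) (hu : u ∈ c.supp) (hv : v ∈ d.supp) :
    MatchingReach G A M u v := by
  obtain ⟨hc, hd, rfl | ⟨x, ⟨hx, hxA⟩, y, ⟨hy, -⟩, hxy, hmem⟩ |
    ⟨y, ⟨hy, -⟩, x, ⟨hx, hxB⟩, hxy, hnotMem⟩⟩ := h
  · exact hc.matchingReach hG hM hu hv
  · have harc : MatchingArc G A M x y := ⟨hxy, iff_of_true hxA (hmem M hM)⟩
    exact (hc.matchingReach hG hM hu hx).trans (.head harc (hd.matchingReach hG hM hy hv))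
  · have harc : MatchingArc G A M x y :=
      ⟨hxy.symm, iff_of_false (hG.mem_right_iff.mp hxB) (Sym2.eq_swap ▸ hnotMem M hM)⟩
    exact (hc.matchingReach hG hM hu hx).trans (.head harc (hd.matchingReach hG hM hy hv))

theorem matchingReach_of_reflTransGen_consStepRel (hG : Bipartition G A B)
    (hM : IsMaxBMatching G b M) (hc : ConsistentComp G b c)
    (h : Relation.ReflTransGen (ConsStepRel G b A B) c d) (hu : u ∈ c.supp) (hv : v ∈ d.supp) :
    MatchingReach G A M u v := by
  induction h generalizing v with
  | refl => exact hc.matchingReach hG hM hu hv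
  | @tail c' _ _ hstep ih =>
    obtain ⟨w, hw⟩ := c'.nonempty_supp
    exact (ih hw).trans (hstep.matchingReach hG hM hw hv)

theorem reflTransGen_consStepRel_of_matchingReach (hG : Bipartition G A B)
    (hM : IsMaxBMatching G b M) (hc : ConsistentComp G b c) (hd : ConsistentComp G b d)
    (hu : u ∈ c.supp) (hv : v ∈ d.supp) (h : MatchingReach G A M u v) :
    Relation.ReflTransGen (ConsStepRel G b A B) c d := by
  induction h generalizing d with
  | refl => exact SimpleGraph.ConnectedComponent.eq_of_common_vertex hu hv ▸ .refl
  | @tail w v huw harc ih =>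
    have huA := ((consistentComp_iff hG hM hu).mp hc).1
    have hvB := ((consistentComp_iff hG hM hv).mp hd).2
    have hw : ConsistentComp G b ((flexGraph G b).connectedComponentMk w) :=
      (consistentComp_iff hG hM rfl).mpr ⟨mt (mem_looseBasin_of_matchingReach huw) huA,
        mt (mem_right_looseBasin_of_matchingReach hG (.single harc)) hvB⟩
    obtain rfl : (flexGraph G b).connectedComponentMk v = d := hv
    exact (ih hw rfl).tail ⟨hw, hd, stepRel_of_matchingArc hG hM harc⟩

end Chain

/-- For `b`-consistent flexible components `C` and `D` and a maximum `b`-matching `M`, the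
following are equivalent: `C ⪯_A D` (via a chain of `b`-consistent flexible components);
every `u ∈ V(C)`, `v ∈ V(D)` are joined by an `(M; A, B)`-ascending path; some
`u ∈ V(C)`, `v ∈ V(D)` are joined by an `(M; A, B)`-ascending path. -/
theorem stmt_19 (G : SimpleGraph V) (A B : Set V) (hG : Bipartition G A B) (b : V → ℕ)
    (M : Set (Sym2 V)) (hM : IsMaxBMatching G b M)
    (c d : FlexComp G b) (hc : ConsistentComp G b c) (hd : ConsistentComp G b d) :
    (Relation.ReflTransGen (ConsStepRel G b A B) c d ↔
      ∀ u ∈ c.supp, ∀ v ∈ d.supp, ∃ p : G.Walk u v, IsAscending A B M p) ∧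
    (Relation.ReflTransGen (ConsStepRel G b A B) c d ↔
      ∃ u ∈ c.supp, ∃ v ∈ d.supp, ∃ p : G.Walk u v, IsAscending A B M p) := by
  simp only [exists_isAscending_iff hG]
  have chain_of_exists (h : ∃ u ∈ c.supp, ∃ v ∈ d.supp, MatchingReach G A M u v) :
      Relation.ReflTransGen (ConsStepRel G b A B) c d := by
    obtain ⟨u, hu, v, hv, huv⟩ := h
    exact reflTransGen_consStepRel_of_matchingReach hG hM hc hd hu hv huv
  have forall_of_chain (h : Relation.ReflTransGen (ConsStepRel G b A B) c d) :
      ∀ u ∈ c.supp, ∀ v ∈ d.supp, MatchingReach G A M u v := fun _ hu _ hv =>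
    matchingReach_of_reflTransGen_consStepRel hG hM hc h hu hv
  have exists_of_forall (h : ∀ u ∈ c.supp, ∀ v ∈ d.supp, MatchingReach G A M u v) :
      ∃ u ∈ c.supp, ∃ v ∈ d.supp, MatchingReach G A M u v := by
    obtain ⟨u, hu⟩ := c.nonempty_supp
    obtain ⟨v, hv⟩ := d.nonempty_supp
    exact ⟨u, hu, v, hv, h u hu v hv⟩
  exact ⟨⟨forall_of_chain, chain_of_exists ∘ exists_of_forall⟩,
    exists_of_forall ∘ forall_of_chain, chain_of_exists⟩
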